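/- Let H be a nonzero complex Hilbert space, let φ : B(H) → B(H) be a surjective *-homomorphism, and let S ∈ B(H) be an isometry such that φ(x) S = S x for all x ∈ B(H). Then S is a unitary. -/

import Mathlib

open ContinuousLinearMap

noncomputable section

/-! Rank-one operators carry a nonzero vector to any prescribed vector, so a set containing a
nonzero vector and invariant under every operator is the whole space. The relation
`φ x ∘ S = S ∘ x` makes the range of `S` invariant under the image of `φ`, that is, under every
operator. -/

section SeparatingDual

variable {𝕜 E F : Type*} [DivisionRing 𝕜] [TopologicalSpace 𝕜]
  [AddCommGroup E] [TopologicalSpace E] [Module 𝕜 E]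
  [AddCommGroup F] [TopologicalSpace F] [Module 𝕜 F] [ContinuousSMul 𝕜 F]

theorem exists_continuousLinearMap_apply_eq [SeparatingDual 𝕜 E] {v : E} (hv : v ≠ 0)
    (w : F) : ∃ A : E →L[𝕜] F, A v = w := by
  obtain ⟨f, hf⟩ := SeparatingDual.exists_ne_zero (R := 𝕜) hv
  exact ⟨f.smulRight ((f v)⁻¹ • w), by rw [smulRight_apply, smul_inv_smul₀ hf]⟩

variable [SeparatingDual 𝕜 F]

theorem eq_univ_of_forall_mapsTo_continuousLinearMap {s : Set F} {v : F} (hvs : v ∈ s)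
    (hv : v ≠ 0) (hs : ∀ A : F →L[𝕜] F, Set.MapsTo A s s) : s = Set.univ := by
  refine Set.eq_univ_of_forall fun w ↦ ?_
  obtain ⟨A, rfl⟩ := exists_continuousLinearMap_apply_eq (𝕜 := 𝕜) hv w
  exact hs A hvs

theorem surjective_of_surjective_intertwining {φ : (E →L[𝕜] E) → (F →L[𝕜] F)}
    (hφ : Function.Surjective φ) {S : E →L[𝕜] F} (hS : S ≠ 0)
    (hint : ∀ x, φ x ∘L S = S ∘L x) : Function.Surjective S := by
  obtain ⟨v, hv⟩ := DFunLike.ne_iff.mp hS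
  have range_invariant (A : F →L[𝕜] F) : Set.MapsTo A (Set.range S) (Set.range S) := by
    obtain ⟨x, rfl⟩ := hφ A
    rintro _ ⟨u, rfl⟩
    exact ⟨x u, (DFunLike.congr_fun (hint x) u).symm⟩
  exact Set.range_eq_univ.mp <|
    eq_univ_of_forall_mapsTo_continuousLinearMap (Set.mem_range_self v) hv range_invariant

theorem intertwining_isometry_of_surjective_star_hom_is_unitary_general
    {φ : (E →L[𝕜] E) → (F →L[𝕜] F)} (hφ : Function.Surjective φ)
    {S : E →L[𝕜] F} {T : F →L[𝕜] E} (hTS : T ∘L S = .id 𝕜 E)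
    (hint : ∀ x, φ x ∘L S = S ∘L x) : S ∘L T = .id 𝕜 F := by
  have left_inv : Function.LeftInverse T S := DFunLike.congr_fun hTS
  rcases subsingleton_or_nontrivial E with _ | _
  · have : Subsingleton (F →L[𝕜] F) := hφ.subsingleton
    exact Subsingleton.elim _ _
  · have S_ne_zero : S ≠ 0 := by
      rintro rfl
      obtain ⟨v, hv⟩ := exists_ne (0 : E)
      exact hv (left_inv.injective rfl)
    have S_surjective := surjective_of_surjective_intertwining hφ S_ne_zero hint
    exact ContinuousLinearMap.ext (left_inv.rightInverse_of_surjective S_surjective)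

end SeparatingDual

/-- if `H ≠ 0`, `φ` is a surjective `*`-homomorphism of `B(H)` and `S` is an
isometry with `φ x * S = S * x` for all `x`, then `S` is a unitary. -/
theorem intertwining_isometry_of_surjective_star_hom_is_unitary
    {H : Type*} [NormedAddCommGroup H] [InnerProductSpace ℂ H] [CompleteSpace H] [Nontrivial H]
    (φ : (H →L[ℂ] H) →ₗ[ℂ] (H →L[ℂ] H))
    (hφ_mul : ∀ x y : H →L[ℂ] H, φ (x * y) = φ x * φ y)
    (hφ_star : ∀ x : H →L[ℂ] H, φ (star x) = star (φ x))
    (hφ_surj : Function.Surjective φ)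
    (S : H →L[ℂ] H)
    (hS_iso : ContinuousLinearMap.adjoint S * S = 1)
    (hint : ∀ x : H →L[ℂ] H, φ x * S = S * x) :
    S * ContinuousLinearMap.adjoint S = 1 :=
  intertwining_isometry_of_surjective_star_hom_is_unitary_general hφ_surj hS_iso hint

end
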